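/- There exist a commutative integral domain R that is a unique factorization domain of characteristic 2, an integer m ≥ 1, and an element f of the group algebra B = R[(ℤ/2ℤ)^m] such that the annihilator ideal {r ∈ B : r·f = 0} is not a finitely generated ideal of B; hence B is not a quasi coherent ring, so the quasi coherent property does not ascend from a G-GCD ring (in particular, a UFD) R to the group ring RG over a finitely generated abelian group G. -/

import Mathlib

/-! The group ring of `(ℤ/2ℤ)^3` over `R` is `R[X₀, X₁, X₂]/(X₀², X₁², X₂²)` with `Xᵢ = gᵢ + 1`
when `R` has characteristic 2. For `f = ∑ aᵢ Xᵢ`, an element `∑ sᵢ ∏_{j ≠ i} Xⱼ` kills `f`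
exactly when `s` is a syzygy of `(a₀, a₁, a₂)`, so it suffices to find a UFD of characteristic 2
with a triple whose syzygy module is not finitely generated.

Let `P` be the polynomial ring over `𝔽₂` in `a₀, a₁, a₂` and `xₙ, yₙ, zₙ` (`n ∈ ℕ`), and let `σₙ` be
the involution sending `(xₙ, yₙ, zₙ)` to `(xₙ + a₀, yₙ + a₁, zₙ + a₂)` and fixing the other
variables. The ring `R` of common invariants is a UFD: the only unit of `P` is `1`, so the gcd of
two invariants is again invariant, and therefore irreducible invariants are prime
(`uniqueFactorizationMonoid_invariants`). It contains the cross product of `(xₙ, yₙ, zₙ)` and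
`(a₀, a₁, a₂)`, which is a syzygy for every `n`.

Given finitely many annihilators `h` of `f`, choose `n` such that `zₙ` occurs in none of their
coefficients. Let `Λ` be the coefficient of the monomial `a₁ zₙ`. Comparing the linear terms in
`h * f = 0` shows that the constant terms of the coefficients of `h` are all equal
(`constantCoeff_coeff_eq`). An invariant has no linear term in `zₙ`
(`constantCoeff_pderiv_invariant`), hence `Λ (r p) = Λ r * p(0)` for `r ∈ R` and `p` a coefficient
of `h`. Consequently, for every `e` in the ideal generated by the `h`, the value of `Λ` on the
coefficient of `e` at `g` does not depend on `g`. This fails for the annihilator built from the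
`n`-th syzygy. -/

/-- The elementary abelian 2-group `(ℤ/2ℤ)^m`, written multiplicatively. -/
abbrev ElemAbelian2Group (m : ℕ) : Type := Multiplicative (Fin m → ZMod 2)

/-- The annihilator `{r ∈ B : r·f = 0}` of an element `f` of a commutative ring `B`,
as an ideal of `B`. -/
def annIdeal {B : Type} [CommRing B] (f : B) : Ideal B where
  carrier := {r : B | r * f = 0}
  add_mem' := by
    intro x y hx hy
    simp only [Set.mem_setOf_eq] at *
    rw [add_mul, hx, hy, add_zero]
  zero_mem' := by simp
  smul_mem' := by
    intro c x hx
    simp only [Set.mem_setOf_eq, smul_eq_mul] at *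
    rw [mul_assoc, hx, mul_zero]

/-- A commutative ring `R` is *quasi coherent* if for all `a₁,…,aₙ, c ∈ R` the ideals
`a₁R ∩ ⋯ ∩ aₙR` and `(0 : c) = {r ∈ R : rc = 0}` are finitely generated. -/
def IsQuasiCoherentRing (R : Type) [CommRing R] : Prop :=
  (∀ (n : ℕ) (a : Fin n → R), (⨅ i : Fin n, Ideal.span {a i}).FG) ∧
    ∀ c : R, (annIdeal c).FG

namespace NonCoherentUFD

open MvPolynomial

/-! ### Invariants of involutions in a unique factorization domain -/

/-- The elements of `P` fixed by every member of a family of ring endomorphisms. -/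
def invariants {P ι : Type*} [CommRing P] (s : ι → P →+* P) : Subring P where
  carrier := {p | ∀ i, s i p = p}
  mul_mem' := fun ha hb i => by rw [map_mul, ha i, hb i]
  one_mem' := fun i => map_one _
  add_mem' := fun ha hb i => by rw [map_add, ha i, hb i]
  zero_mem' := fun i => map_zero _
  neg_mem' := fun ha i => by rw [map_neg, ha i]

section
variable {P ι : Type*} [CommRing P] [IsDomain P] (s : ι → P →+* P)

/-- Divisibility of invariants may be tested in the ambient domain, because the quotient of two
invariants is invariant. -/
theorem invariants_dvd_iff (a b : invariants s) : a ∣ b ↔ (a : P) ∣ b := by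
  constructor
  · rintro ⟨c, rfl⟩
    exact ⟨c, rfl⟩
  · rintro ⟨c, hc⟩
    by_cases ha : (a : P) = 0
    · have hb : b = 0 := Subtype.ext (by simpa [ha] using hc)
      simp [hb]
    · refine ⟨⟨c, fun i => ?_⟩, Subtype.ext hc⟩
      apply mul_left_cancel₀ ha
      have h := b.2 i
      rw [hc, map_mul, a.2 i] at h
      exact h

theorem uniqueFactorizationMonoid_invariants [UniqueFactorizationMonoid P] [Subsingleton Pˣ]
    (hs : ∀ i p, s i (s i p) = p) : UniqueFactorizationMonoid (invariants s) := by
  have hdvd := invariants_dvd_iff s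
  have hwf : WfDvdMonoid (invariants s) := by
    refine ⟨Subrelation.wf (r := InvImage DvdNotUnit (Subtype.val : invariants s → P)) ?_
      (InvImage.wf _ (wellFounded_dvdNotUnit (α := P)))⟩
    intro a b hab
    obtain ⟨h1, h2⟩ := dvd_and_not_dvd_iff.2 hab
    exact dvd_and_not_dvd_iff.1 ⟨(hdvd a b).1 h1, fun h => h2 ((hdvd b a).2 h)⟩
  let _ := UniqueFactorizationMonoid.toGCDMonoid P
  refine { hwf with irreducible_iff_prime := fun {p} => ⟨fun hp => ?_, Prime.irreducible⟩ }
  refine ⟨hp.ne_zero, hp.not_isUnit, fun x y hxy => ?_⟩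
  -- The gcd of the invariants `p` and `x`, computed in `P`, is itself invariant.
  have hd (i) : s i (gcd (p : P) x) = gcd (p : P) x := by
    have h1 : s i (gcd (p : P) x) ∣ gcd (p : P) x := by
      apply dvd_gcd
      · simpa [p.2 i] using map_dvd (s i) (gcd_dvd_left (p : P) x)
      · simpa [x.2 i] using map_dvd (s i) (gcd_dvd_right (p : P) x)
    have h2 : gcd (p : P) x ∣ s i (gcd (p : P) x) := by
      simpa [hs] using map_dvd (s i) h1
    exact associated_iff_eq.1 (associated_of_dvd_dvd h1 h2)
  let d : invariants s := ⟨gcd (p : P) x, hd⟩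
  have hdx : d ∣ x := (hdvd _ _).2 (gcd_dvd_right (p : P) x)
  obtain ⟨e, he⟩ : d ∣ p := (hdvd _ _).2 (gcd_dvd_left (p : P) x)
  rcases hp.isUnit_or_isUnit he with h | h
  · right
    have hu : IsUnit (gcd (p : P) x) := h.map (invariants s).subtype
    rw [hdvd] at hxy ⊢
    have h3 := dvd_gcd_mul_of_dvd_mul hxy
    exact (hu.dvd_mul_left).1 h3
  · left
    rw [he]
    exact (h.mul_right_dvd).2 hdx

end

/-! ### The ring -/

/-- The index set of the variables: `(none, 0)`, `(none, 1)`, `(none, 2)` stand for `a₀, a₁, a₂`,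
and `(some n, 0)`, `(some n, 1)`, `(some n, 2)` for `xₙ, yₙ, zₙ`. -/
abbrev Idx : Type := Option ℕ × Fin 3

/-- The ambient polynomial ring over `𝔽₂`. -/
abbrev Poly : Type := MvPolynomial Idx (ZMod 2)

theorem poly_add_self (p : Poly) : p + p = 0 := CharTwo.add_self_eq_zero p

/-- The involution `σₙ`, adding `(a₀, a₁, a₂)` to `(xₙ, yₙ, zₙ)` and fixing all other variables. -/
noncomputable def shift (n : ℕ) : Poly →ₐ[ZMod 2] Poly :=
  aeval fun v => if v.1 = some n then X v + X (none, v.2) else X v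

theorem shift_X (n : ℕ) (v : Idx) :
    shift n (X v) = if v.1 = some n then X v + X (none, v.2) else X v := by
  simp [shift]

theorem shift_shift (n : ℕ) (p : Poly) : shift n (shift n p) = p := by
  have h : (shift n).comp (shift n) = AlgHom.id _ _ := by
    apply MvPolynomial.algHom_ext
    intro v
    by_cases hv : v.1 = some n
    · simp [shift_X, hv, add_assoc, poly_add_self]
    · simp [shift_X, hv]
  exact DFunLike.congr_fun h p

/-- The UFD of common invariants of the involutions `σₙ`. -/
abbrev InvRing : Type := invariants fun n : ℕ => (shift n : Poly →+* Poly)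

instance : Subsingleton Polyˣ := by
  refine ⟨fun a b => Units.ext ?_⟩
  have key (u : Polyˣ) : (u : Poly) = 1 := by
    obtain ⟨r, hr, h⟩ := MvPolynomial.isUnit_iff_eq_C_of_isReduced.1 u.isUnit
    have hr1 : r = 1 := by
      have key : ∀ x : ZMod 2, x ≠ 0 → x = 1 := by decide
      exact key r hr.ne_zero
    rw [h, hr1, map_one]
  rw [key, key]

instance : UniqueFactorizationMonoid InvRing :=
  uniqueFactorizationMonoid_invariants _ fun n p => shift_shift n p

instance : CharP InvRing 2 :=
  (RingHom.charP_iff (invariants fun n : ℕ => (shift n : Poly →+* Poly)).subtype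
    Subtype.val_injective 2).2 inferInstance

theorem constantCoeff_shift (n : ℕ) (p : Poly) :
    constantCoeff (shift n p) = constantCoeff p := by
  have h : (constantCoeff.comp (shift n : Poly →+* Poly)) = constantCoeff := by
    apply MvPolynomial.ringHom_ext
    · intro r; simp [shift]
    · intro v
      by_cases hv : v.1 = some n <;> simp [shift_X, hv]
  exact DFunLike.congr_fun h p

/-- The linear coefficient of `σₙ p` at `aᵢ` is the sum of the linear coefficients of `p` at `aᵢ`
and at the `i`-th variable of the `n`-th block. -/
theorem constantCoeff_pderiv_shift (n : ℕ) (i : Fin 3) (p : Poly) :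
    constantCoeff (pderiv (none, i) (shift n p)) =
      constantCoeff (pderiv (none, i) p) + constantCoeff (pderiv (some n, i) p) := by
  induction p using MvPolynomial.induction_on with
  | C r => simp [shift]
  | add p q hp hq => simp only [map_add, hp, hq]; ring
  | mul_X p v hp =>
    have hX : constantCoeff (pderiv (none, i) (shift n (X v))) =
        constantCoeff (pderiv (none, i) (X v : Poly)) +
          constantCoeff (pderiv (some n, i) (X v : Poly)) := by
      obtain ⟨v, j⟩ := v
      rw [shift_X]
      rcases v with _ | m
      · by_cases hj : j = i <;> simp [pderiv_X, hj]
      · by_cases hm : m = n <;> by_cases hj : j = i <;>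
          simp [pderiv_X, hj, hm]
    simp only [map_mul, pderiv_mul, map_add, hp, hX, constantCoeff_shift, constantCoeff_X]
    ring

theorem constantCoeff_pderiv_invariant (n : ℕ) (i : Fin 3) (r : InvRing) :
    constantCoeff (pderiv (some n, i) (r : Poly)) = 0 := by
  have h := constantCoeff_pderiv_shift n i r
  have hr : shift n (r : Poly) = r := r.2 n
  rw [hr] at h
  simpa using h

/-- The elements `a₀, a₁, a₂` of the invariant ring. -/
noncomputable def a (i : Fin 3) : InvRing :=
  ⟨X (none, i), fun n => by simp [shift_X]⟩

/-- The `2 × 2` minors of the matrix with rows `(xₙ, yₙ, zₙ)` and `(a₀, a₁, a₂)`. -/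
noncomputable def minor (n : ℕ) (i j : Fin 3) : InvRing :=
  ⟨X (some n, i) * X (none, j) + X (some n, j) * X (none, i), fun m => by
    by_cases h : n = m
    · simp only [RingHom.coe_coe, map_add, map_mul, shift_X, h, if_true, reduceCtorEq, if_false]
      linear_combination poly_add_self (X (none, i) * X (none, j))
    · simp [shift_X, h]⟩

theorem inv_two : (2 : InvRing) = 0 := CharTwo.two_eq_zero

theorem syzygy (n : ℕ) : a 0 * minor n 1 2 + a 1 * minor n 0 2 + a 2 * minor n 0 1 = 0 := by
  apply Subtype.ext
  simp only [a, minor, Subring.coe_add, Subring.coe_mul, Subring.coe_zero]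
  linear_combination poly_add_self (X (none, 0) * X (some n, 1) * X (none, 2)) +
    poly_add_self (X (none, 0) * X (some n, 2) * X (none, 1)) +
    poly_add_self (X (none, 1) * X (some n, 0) * X (none, 2))

/-! ### The group algebra -/

/-- The group algebra of `(ℤ/2ℤ)^3` over the invariant ring. -/
abbrev GrpAlg : Type := MonoidAlgebra InvRing (ElemAbelian2Group 3)

/-- The standard generators of `(ℤ/2ℤ)^3`. -/
def gen (i : Fin 3) : ElemAbelian2Group 3 := Multiplicative.ofAdd (Pi.single i 1)

/-- The square-zero element `gᵢ + 1` of the group algebra. -/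
noncomputable def nil (i : Fin 3) : GrpAlg := MonoidAlgebra.single (gen i) 1 + 1

theorem grpAlg_two : (2 : GrpAlg) = 0 := by
  rw [← map_ofNat (algebraMap InvRing GrpAlg) 2, inv_two, map_zero]

theorem nil_mul_self (i : Fin 3) : nil i * nil i = 0 := by
  have h : (MonoidAlgebra.single (gen i) 1 : GrpAlg) * MonoidAlgebra.single (gen i) 1 = 1 := by
    rw [MonoidAlgebra.single_mul_single, MonoidAlgebra.one_def]
    congr 1
    · revert i; decide
    · simp
  unfold nil
  linear_combination h + (1 + MonoidAlgebra.single (gen i) 1) * grpAlg_two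

/-- The element `∑ aᵢ (gᵢ + 1)`, whose annihilator is not finitely generated. -/
noncomputable def elt : GrpAlg := ∑ i, algebraMap InvRing GrpAlg (a i) * nil i

/-- The annihilator of `elt` coming from the `n`-th syzygy of `(a₀, a₁, a₂)`. -/
noncomputable def killer (n : ℕ) : GrpAlg :=
  algebraMap InvRing GrpAlg (minor n 1 2) * (nil 1 * nil 2) +
  algebraMap InvRing GrpAlg (minor n 0 2) * (nil 0 * nil 2) +
  algebraMap InvRing GrpAlg (minor n 0 1) * (nil 0 * nil 1)

theorem killer_mul_elt (n : ℕ) : killer n * elt = 0 := by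
  have h := congrArg (algebraMap InvRing GrpAlg) (syzygy n)
  simp only [map_add, map_mul, map_zero] at h
  simp only [killer, elt, Fin.sum_univ_three]
  generalize algebraMap InvRing GrpAlg (minor n 1 2) = u at *
  generalize algebraMap InvRing GrpAlg (minor n 0 2) = v at *
  generalize algebraMap InvRing GrpAlg (minor n 0 1) = w at *
  generalize algebraMap InvRing GrpAlg (a 0) = b0 at *
  generalize algebraMap InvRing GrpAlg (a 1) = b1 at *
  generalize algebraMap InvRing GrpAlg (a 2) = b2 at *
  linear_combination (nil 0 * nil 1 * nil 2) * h +
    (v * b0 * nil 2 + w * b0 * nil 1) * nil_mul_self 0 +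
    (u * b1 * nil 2 + w * b1 * nil 0) * nil_mul_self 1 +
    (u * b2 * nil 1 + v * b2 * nil 0) * nil_mul_self 2

theorem killer_coeff_one (n : ℕ) :
    (killer n).coeff 1 = minor n 1 2 + minor n 0 2 + minor n 0 1 := by
  have h0 : gen 0 ≠ 1 := by decide
  have h1 : gen 1 ≠ 1 := by decide
  have h2 : gen 2 ≠ 1 := by decide
  have h3 : gen 1 * gen 2 ≠ 1 := by decide
  have h4 : gen 0 * gen 2 ≠ 1 := by decide
  have h5 : gen 0 * gen 1 ≠ 1 := by decide
  simp [killer, nil, mul_add, add_mul, MonoidAlgebra.one_def, MonoidAlgebra.single_mul_single,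
    h0, h1, h2, h3, h4, h5]

theorem killer_coeff_gen_zero (n : ℕ) :
    (killer n).coeff (gen 0) = minor n 0 2 + minor n 0 1 := by
  have h0 : 1 ≠ gen 0 := by decide
  have h1 : gen 1 ≠ gen 0 := by decide
  have h2 : gen 2 ≠ gen 0 := by decide
  have h3 : gen 1 * gen 2 ≠ gen 0 := by decide
  have h4 : gen 0 * gen 2 ≠ gen 0 := by decide
  have h5 : gen 0 * gen 1 ≠ gen 0 := by decide
  simp [killer, nil, mul_add, add_mul, MonoidAlgebra.one_def, MonoidAlgebra.single_mul_single,
    h0, h1, h2, h3, h4, h5]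

theorem coeff_mul_nil (h : GrpAlg) (r : InvRing) (i : Fin 3) (g : ElemAbelian2Group 3) :
    (h * (algebraMap InvRing GrpAlg r * nil i)).coeff g =
      h.coeff (g * gen i) * r + h.coeff g * r := by
  have hi : (gen i)⁻¹ = gen i := by revert i; decide
  have h1 : algebraMap InvRing GrpAlg r * nil i =
      MonoidAlgebra.single (gen i) r + MonoidAlgebra.single 1 r := by
    simp [nil, mul_add, MonoidAlgebra.single_mul_single]
  rw [h1, mul_add, MonoidAlgebra.coeff_add, Finsupp.add_apply,
    MonoidAlgebra.coeff_mul_single_apply, MonoidAlgebra.coeff_mul_single_apply, hi]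
  simp

/-- A function on `(ℤ/2ℤ)^3` invariant under translation by the generators is constant. -/
theorem eq_of_gen_invariant {α : Type*} (φ : ElemAbelian2Group 3 → α)
    (h : ∀ g i, φ (g * gen i) = φ g) (g : ElemAbelian2Group 3) : φ g = φ 1 := by
  have key : ∀ g : ElemAbelian2Group 3, ∃ x y z : Fin 2,
      g = 1 * gen 0 ^ (x : ℕ) * gen 1 ^ (y : ℕ) * gen 2 ^ (z : ℕ) := by decide
  have hp (g i) (x : Fin 2) : φ (g * gen i ^ (x : ℕ)) = φ g := by
    fin_cases x <;> simp [h]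
  obtain ⟨x, y, z, rfl⟩ := key g
  rw [hp, hp, hp]

/-- The linear part of `h * elt = 0` in `aᵢ` shows that the constant term of `h` is invariant under
translation by `gᵢ`. -/
theorem constantCoeff_coeff_eq (h : GrpAlg) (hh : h * elt = 0) (g : ElemAbelian2Group 3) :
    constantCoeff (h.coeff g : Poly) = constantCoeff (h.coeff 1 : Poly) := by
  refine eq_of_gen_invariant (fun g => constantCoeff (h.coeff g : Poly)) (fun g i => ?_) g
  have h1 : ((h * elt).coeff g : Poly) = 0 := by rw [hh]; simp
  rw [elt, Finset.mul_sum] at h1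
  simp only [Fin.sum_univ_three, MonoidAlgebra.coeff_add, Finsupp.add_apply, coeff_mul_nil,
    Subring.coe_add, Subring.coe_mul, a] at h1
  have h2 := congrArg (fun p : Poly => constantCoeff (pderiv (none, i) p)) h1
  have h3 : constantCoeff (h.coeff (g * gen i) : Poly) + constantCoeff (h.coeff g : Poly) = 0 := by
    fin_cases i <;> simpa [pderiv_mul, pderiv_X, Pi.single_apply] using h2
  exact CharTwo.add_eq_zero.1 h3

/-! ### The annihilator is not finitely generated -/

/-- The coefficient of the monomial `a₁ zₙ`, computed as the constant term of a second partial
derivative so that the Leibniz rule applies. -/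
noncomputable def mixedCoeff (n : ℕ) : Poly →+ ZMod 2 :=
  (constantCoeff : Poly →+* ZMod 2).toAddMonoidHom.comp
    ((pderiv (R := ZMod 2) ((none, 1) : Idx)).toLinearMap.toAddMonoidHom.comp
      (pderiv (R := ZMod 2) ((some n, 2) : Idx)).toLinearMap.toAddMonoidHom)

theorem mixedCoeff_apply (n : ℕ) (p : Poly) :
    mixedCoeff n p = constantCoeff (pderiv (none, 1) (pderiv (some n, 2) p)) := rfl

theorem mixedCoeff_mul (n : ℕ) (r : InvRing) (p : Poly) (hp : ((some n, 2) : Idx) ∉ p.vars) :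
    mixedCoeff n (r * p) = mixedCoeff n r * constantCoeff p := by
  simp [mixedCoeff_apply, pderiv_eq_zero_of_notMem_vars hp, constantCoeff_pderiv_invariant,
    mul_comm]

theorem mixedCoeff_mul_coeff (n : ℕ) (h : GrpAlg) (hh : h * elt = 0)
    (hn : ∀ g, ((some n, 2) : Idx) ∉ (h.coeff g : Poly).vars) (c : GrpAlg)
    (g : ElemAbelian2Group 3) :
    mixedCoeff n ((c * h).coeff g : Poly) = mixedCoeff n ((c * h).coeff 1 : Poly) := by
  induction c using MonoidAlgebra.induction_linear with
  | zero => simp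
  | add c d hc hd =>
    simp only [add_mul, MonoidAlgebra.coeff_add, Finsupp.add_apply, Subring.coe_add, map_add,
      hc, hd]
  | single k r =>
    simp only [MonoidAlgebra.coeff_single_mul_apply, Subring.coe_mul]
    rw [mixedCoeff_mul n r _ (hn _), mixedCoeff_mul n r _ (hn _),
      constantCoeff_coeff_eq h hh (k⁻¹ * g), constantCoeff_coeff_eq h hh (k⁻¹ * 1)]

theorem annIdeal_not_fg : ¬ (annIdeal elt).FG := by
  rintro ⟨S, hS⟩
  have hSk (h) (hh : h ∈ S) : h * elt = 0 := by
    have : h ∈ annIdeal elt := hS ▸ Ideal.subset_span hh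
    exact this
  -- Only finitely many variables occur in the coefficients of the generators.
  obtain ⟨n, hn⟩ : ∃ n : ℕ, ∀ h ∈ S, ∀ g, ((some n, 2) : Idx) ∉ (h.coeff g : Poly).vars := by
    classical
    let V : Finset Idx := S.biUnion fun h => Finset.univ.biUnion fun g => (h.coeff g : Poly).vars
    have hinj : Function.Injective fun n : ℕ => ((some n, 2) : Idx) := fun m n h => by
      simpa using h
    obtain ⟨n, hn⟩ := Infinite.exists_notMem_finset (V.preimage _ hinj.injOn)
    refine ⟨n, fun h hh g hg => hn ?_⟩
    simp only [Finset.mem_preimage, V, Finset.mem_biUnion]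
    exact ⟨h, hh, g, Finset.mem_univ g, hg⟩
  have hmem : killer n ∈ Ideal.span (S : Set GrpAlg) := by
    rw [hS]
    exact killer_mul_elt n
  have hconst (e : GrpAlg) (he : e ∈ Ideal.span (S : Set GrpAlg)) : ∀ c g,
      mixedCoeff n ((c * e).coeff g : Poly) = mixedCoeff n ((c * e).coeff 1 : Poly) := by
    induction he using Submodule.span_induction with
    | mem h hh => exact fun c g => mixedCoeff_mul_coeff n h (hSk h hh) (hn h hh) c g
    | zero => intro c g; simp
    | add x y _ _ hx hy =>
      intro c g
      simp only [mul_add, MonoidAlgebra.coeff_add, Finsupp.add_apply, Subring.coe_add, map_add,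
        hx c g, hy c g]
    | smul b x _ hx =>
      intro c g
      rw [smul_eq_mul, ← mul_assoc]
      exact hx _ g
  have h := hconst _ hmem 1 (gen 0)
  rw [one_mul, killer_coeff_one, killer_coeff_gen_zero] at h
  simp [minor, mixedCoeff_apply, pderiv_X] at h

end NonCoherentUFD

/-- There exist a UFD `R` of characteristic 2, an integer `m ≥ 1`, and an element `f`
of the group algebra `B = R[(ℤ/2ℤ)^m]` whose annihilator ideal `{r ∈ B : r·f = 0}` is
not finitely generated; hence `B` is not a quasi coherent ring, so the quasi coherent
property does not ascend from a G-GCD ring (in particular, a UFD) to group rings over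
finitely generated abelian groups. -/
theorem quasiCoherent_does_not_ascend_to_group_ring :
    ∃ (R : Type) (_ : CommRing R) (_ : IsDomain R) (_ : UniqueFactorizationMonoid R)
      (_ : CharP R 2) (m : ℕ),
      1 ≤ m ∧
      ∃ f : MonoidAlgebra R (ElemAbelian2Group m),
        ¬ (annIdeal f).FG ∧
        ¬ IsQuasiCoherentRing (MonoidAlgebra R (ElemAbelian2Group m)) := by
  exact ⟨NonCoherentUFD.InvRing, inferInstance, inferInstance, inferInstance, inferInstance, 3,
    by norm_num, NonCoherentUFD.elt, NonCoherentUFD.annIdeal_not_fg,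
    fun h => NonCoherentUFD.annIdeal_not_fg (h.2 _)⟩
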